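/- arXiv:2507.18613 — 2 statements merged into one kernel-verified Lean document; each statement's English description precedes it below -/
import Mathlib

section
/- Let X be a connected topological space and let σ : X → X be a continuous map with σ ∘ σ = id. Assume that the fixed-point set Fix(σ) = {x ∈ X : σ(x) = x} is non-empty and connected. Then the fixed-point set of the induced map Sym2.map σ on the symmetric square Sym²(X), endowed with the quotient topology from X × X, is connected. -/
/-- If `σ` is a continuous involution of a connected topological space `X` whose fixed-point
set is non-empty and connected, then the fixed-point set of the induced involution
`Sym2.map σ` of the symmetric square `Sym²(X)` (with the quotient topology) is connected. -/
theorem stmt10 {X : Type*} [TopologicalSpace X] [ConnectedSpace X]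
    (σ : X → X) (hcont : Continuous σ) (hinv : σ ∘ σ = id)
    (hne : {x : X | σ x = x}.Nonempty)
    (hconn : IsConnected {x : X | σ x = x}) :
    IsConnected {p : Sym2 X | Sym2.map σ p = p} := by
  have hmk : Continuous (fun q : X × X => (Sym2.mk q.1 q.2 : Sym2 X)) := continuous_quot_mk
  have hs : ∀ x, σ (σ x) = x := fun x => congrFun hinv x
  have h1 : IsConnected (Set.range (fun x : X => (s(x, σ x) : Sym2 X))) :=
    isConnected_range (hmk.comp (continuous_id.prodMk hcont))
  have h2 : IsConnected ((fun q : X × X => (s(q.1, q.2) : Sym2 X)) ''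
      ({x : X | σ x = x} ×ˢ {x : X | σ x = x})) :=
    (hconn.prod hconn).image _ hmk.continuousOn
  have heq : {p : Sym2 X | Sym2.map σ p = p} =
      Set.range (fun x : X => (s(x, σ x) : Sym2 X)) ∪
      ((fun q : X × X => (s(q.1, q.2) : Sym2 X)) ''
      ({x : X | σ x = x} ×ˢ {x : X | σ x = x})) := by
    ext p
    induction p using Sym2.ind with
    | _ x y =>
      constructor
      · intro h
        have h' : s(σ x, σ y) = s(x, y) := h
        rw [Sym2.eq_iff] at h'
        rcases h' with ⟨hx, hy⟩ | ⟨hx, hy⟩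
        · exact Or.inr ⟨(x, y), ⟨hx, hy⟩, rfl⟩
        · exact Or.inl ⟨x, by simp only [hx]⟩
      · rintro (⟨z, hz⟩ | ⟨⟨a, b⟩, ⟨ha, hb⟩, hz⟩)
        · rw [← hz]
          change s(σ z, σ (σ z)) = s(z, σ z)
          rw [hs, Sym2.eq_swap]
        · rw [← hz]
          change s(σ a, σ b) = s(a, b)
          have ha' : σ a = a := ha
          have hb' : σ b = b := hb
          rw [ha', hb']
  rw [heq]
  obtain ⟨x, hx⟩ := hne
  have hx' : σ x = x := hx
  exact h1.union ⟨s(x, x), ⟨x, by simp only [hx']⟩, ⟨(x, x), ⟨hx, hx⟩, rfl⟩⟩ h2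
end

section
/- Let X be a connected topological space and let σ : X → X be a continuous map with σ ∘ σ = id and with no fixed points. Then the fixed-point set of the induced map Sym2.map σ on the symmetric square Sym²(X) (with the quotient topology) equals the image of the continuous map X → Sym²(X), x ↦ ⟦(x, σ(x))⟧; in particular this fixed-point set is connected. -/
/-- If `σ` is a fixed-point-free continuous involution of a connected topological space `X`,
then the fixed-point set of the induced involution `Sym2.map σ` of the symmetric square
`Sym²(X)` equals the image of `x ↦ ⟦(x, σ x)⟧`; in particular it is connected. -/
theorem stmt11 {X : Type*} [TopologicalSpace X] [ConnectedSpace X]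
    (σ : X → X) (hcont : Continuous σ) (hinv : σ ∘ σ = id)
    (hfix : ∀ x : X, σ x ≠ x) :
    {p : Sym2 X | Sym2.map σ p = p} = Set.range (fun x : X => s(x, σ x)) ∧
    IsConnected {p : Sym2 X | Sym2.map σ p = p} := by
  have key : {p : Sym2 X | Sym2.map σ p = p} = Set.range (fun x : X => s(x, σ x)) := by
    have h2 : ∀ x, σ (σ x) = x := fun x => congrFun hinv x
    ext p
    induction p using Sym2.ind with
    | _ x y =>
      simp only [Set.mem_setOf_eq, Sym2.map_mk, Set.mem_range]
      constructor
      · intro h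
        rcases Sym2.eq_iff.1 h with ⟨h1, _⟩ | ⟨h1, _⟩
        · exact absurd h1 (hfix x)
        · exact ⟨x, by rw [h1]⟩
      · rintro ⟨z, hz⟩
        rcases Sym2.eq_iff.1 hz with ⟨h1, h3⟩ | ⟨h1, h3⟩
        · subst h1 h3
          rw [h2]
          exact Sym2.eq_swap
        · subst h1 h3
          rw [h2]
          exact Sym2.eq_swap
  refine ⟨key, ?_⟩
  rw [key]
  apply isConnected_range
  exact continuous_quot_mk.comp (continuous_id.prodMk hcont)
end
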